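/- arXiv:1811.04429 — 2 statements merged into one kernel-verified Lean document; each statement's English description precedes it below -/
import Mathlib

section
/- Let G be a finite simple chordal graph and let B be an induced complete bipartite subgraph of G with parts B_X = {x} and B_Y = {y_1,...,y_k}. Then for all 1 ≤ i < j ≤ k, the sets M_1(y_i) and M_1(y_j) are disjoint and nonadjacent. -/
open SimpleGraph

/-- `N₁(S)`: the set of vertices at distance exactly 1 from the vertex set `S`. -/
def nOne {V : Type*} (G : SimpleGraph V) (S : Set V) : Set V :=
  {v | v ∉ S ∧ ∃ s ∈ S, G.Adj v s}

/-- `N₂(S)`: the set of vertices at distance exactly 2 from the vertex set `S`. -/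
def nTwo {V : Type*} (G : SimpleGraph V) (S : Set V) : Set V :=
  {v | v ∉ S ∧ (∀ s ∈ S, ¬ G.Adj v s) ∧ ∃ u, G.Adj v u ∧ ∃ s ∈ S, G.Adj u s}

/-- A graph is chordal if every induced cycle is a triangle, i.e. it has no
induced cycle of length at least 4. -/
def IsChordal {V : Type*} (G : SimpleGraph V) : Prop :=
  ∀ n : ℕ, 4 ≤ n → ∀ s : Set V, IsEmpty (G.induce s ≃g cycleGraph n)

/-- A set of vertices is independent if its elements are pairwise nonadjacent. -/
def IsIndepSet {V : Type*} (G : SimpleGraph V) (S : Set V) : Prop :=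
  S.Pairwise fun a b => ¬ G.Adj a b

/-- `B` is an induced complete bipartite subgraph of `G` with parts `B_X = {x}` and
`B_Y = Y`: `Y` is a nonempty independent set not containing `x`, and `x` is adjacent
to every vertex of `Y`. -/
def IsInducedStar {V : Type*} (G : SimpleGraph V) (x : V) (Y : Set V) : Prop :=
  Y.Nonempty ∧ x ∉ Y ∧ (∀ y ∈ Y, G.Adj x y) ∧ ∀ y₁ ∈ Y, ∀ y₂ ∈ Y, ¬ G.Adj y₁ y₂

/-- `M₁(y) = N₁(y) ∩ N₂(B_X)` where `B_X = {x}`. -/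
def M1y {V : Type*} (G : SimpleGraph V) (x : V) (y : V) : Set V :=
  nOne G {y} ∩ nTwo G {x}

/-!
A vertex `a ∈ M₁(yᵢ)` adjacent to `yⱼ` would make `x, yᵢ, a, yⱼ` an induced 4-cycle. Hence every
vertex of `M₁(yᵢ)` is nonadjacent to `yⱼ`, and vice versa, so adjacent `a ∈ M₁(yᵢ)` and
`b ∈ M₁(yⱼ)` would make `x, yᵢ, a, b, yⱼ` an induced 5-cycle.
-/

section InducedCycles

variable {V W : Type*} {G : SimpleGraph V} {H : SimpleGraph W}

theorem isIndContained_of_map_adj_of_map_compl_adj (f : W → V)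
    (hadj : ∀ ⦃i j⦄, H.Adj i j → G.Adj (f i) (f j))
    (hcompl : ∀ ⦃i j⦄, Hᶜ.Adj i j → Gᶜ.Adj (f i) (f j)) : H ⊴ G := by
  have hinj : Function.Injective f := fun i j hij => by
    by_contra hne
    by_cases h : H.Adj i j
    · exact (hadj h).ne hij
    · exact (hcompl ⟨hne, h⟩).ne hij
  refine ⟨⟨⟨f, hinj⟩, fun {i j} => ⟨fun h => ?_, fun h => hadj h⟩⟩⟩
  by_contra hn
  exact (hcompl ⟨fun hij => h.ne (congrArg f hij), hn⟩).2 h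

theorem cycleGraph_four_isIndContained {a b c d : V}
    (hab : G.Adj a b) (hbc : G.Adj b c) (hcd : G.Adj c d) (hda : G.Adj d a)
    (hac : Gᶜ.Adj a c) (hbd : Gᶜ.Adj b d) : cycleGraph 4 ⊴ G := by
  refine isIndContained_of_map_adj_of_map_compl_adj ![a, b, c, d] ?_ ?_ <;> intro i j hij <;>
    fin_cases i <;> fin_cases j <;>
    first
    | assumption
    | exact Adj.symm ‹_›
    | exact absurd hij (by decide)

theorem cycleGraph_five_isIndContained {a b c d e : V}
    (hab : G.Adj a b) (hbc : G.Adj b c) (hcd : G.Adj c d) (hde : G.Adj d e) (hea : G.Adj e a)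
    (hac : Gᶜ.Adj a c) (hbd : Gᶜ.Adj b d) (hce : Gᶜ.Adj c e) (hda : Gᶜ.Adj d a)
    (heb : Gᶜ.Adj e b) : cycleGraph 5 ⊴ G := by
  refine isIndContained_of_map_adj_of_map_compl_adj ![a, b, c, d, e] ?_ ?_ <;> intro i j hij <;>
    fin_cases i <;> fin_cases j <;>
    first
    | assumption
    | exact Adj.symm ‹_›
    | exact absurd hij (by decide)

theorem IsChordal.not_cycleGraph_isIndContained (hG : IsChordal G) {n : ℕ} (hn : 4 ≤ n) :
    ¬ cycleGraph n ⊴ G := fun h => by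
  obtain ⟨s, ⟨e⟩⟩ := isIndContained_iff_exists_iso_induce.1 h
  exact (hG n hn s).false e.symm

end InducedCycles

section M1y

variable {V : Type*} {G : SimpleGraph V} {x y z a b : V}

theorem mem_M1y_iff (hxy : G.Adj x y) : a ∈ M1y G x y ↔ G.Adj a y ∧ Gᶜ.Adj a x := by
  simp only [M1y, nOne, nTwo, Set.mem_inter_iff, Set.mem_ofPred_eq, Set.mem_singleton_iff,
    exists_eq_left, forall_eq, compl_adj]
  exact ⟨fun ⟨⟨_, hay⟩, hax, hnax, _⟩ => ⟨hay, hax, hnax⟩,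
    fun ⟨hay, hax, hnax⟩ => ⟨⟨hay.ne, hay⟩, hax, hnax, y, hay, hxy.symm⟩⟩

theorem compl_adj_of_mem_M1y (h4 : ¬ cycleGraph 4 ⊴ G) (hxy : G.Adj x y)
    (hxz : G.Adj x z) (hyz : Gᶜ.Adj y z) (ha : a ∈ M1y G x y) : Gᶜ.Adj a z := by
  obtain ⟨hay, hax⟩ := (mem_M1y_iff hxy).1 ha
  have hne : a ≠ z := by
    rintro rfl
    exact hax.2 hxz.symm
  exact ⟨hne, fun haz => h4 (cycleGraph_four_isIndContained hxy hay.symm haz hxz.symm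
    hax.symm hyz)⟩

theorem disjoint_M1y (h4 : ¬ cycleGraph 4 ⊴ G) (hxy : G.Adj x y)
    (hxz : G.Adj x z) (hyz : Gᶜ.Adj y z) : Disjoint (M1y G x y) (M1y G x z) :=
  Set.disjoint_left.2 fun _ ha hb =>
    (compl_adj_of_mem_M1y h4 hxy hxz hyz ha).2 ((mem_M1y_iff hxz).1 hb).1

theorem not_adj_of_mem_M1y (h4 : ¬ cycleGraph 4 ⊴ G) (h5 : ¬ cycleGraph 5 ⊴ G)
    (hxy : G.Adj x y) (hxz : G.Adj x z)
    (hyz : Gᶜ.Adj y z) (ha : a ∈ M1y G x y) (hb : b ∈ M1y G x z) : ¬ G.Adj a b := fun hab => by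
  obtain ⟨hay, hax⟩ := (mem_M1y_iff hxy).1 ha
  obtain ⟨hbz, hbx⟩ := (mem_M1y_iff hxz).1 hb
  have haz : Gᶜ.Adj a z := compl_adj_of_mem_M1y h4 hxy hxz hyz ha
  have hby : Gᶜ.Adj b y := compl_adj_of_mem_M1y h4 hxz hxy hyz.symm hb
  exact h5 (cycleGraph_five_isIndContained hxy hay.symm hab hbz hxz.symm
    hax.symm hby.symm haz hbx hyz.symm)

end M1y

theorem stmt3_general {V : Type*} (G : SimpleGraph V) (h4 : ¬ cycleGraph 4 ⊴ G)
    (h5 : ¬ cycleGraph 5 ⊴ G)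
    (x : V) (Y : Set V) (hB : IsInducedStar G x Y)
    (yi yj : V) (hyi : yi ∈ Y) (hyj : yj ∈ Y) (hne : yi ≠ yj) :
    Disjoint (M1y G x yi) (M1y G x yj) ∧
      ∀ a ∈ M1y G x yi, ∀ b ∈ M1y G x yj, ¬ G.Adj a b := by
  obtain ⟨-, -, hadj, hindep⟩ := hB
  have hyy : Gᶜ.Adj yi yj := ⟨hne, hindep yi hyi yj hyj⟩
  exact ⟨disjoint_M1y h4 (hadj yi hyi) (hadj yj hyj) hyy, fun _ ha _ hb =>
    not_adj_of_mem_M1y h4 h5 (hadj yi hyi) (hadj yj hyj) hyy ha hb⟩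

/-- For distinct `yᵢ, yⱼ ∈ B_Y`, the sets `M₁(yᵢ)` and `M₁(yⱼ)` are disjoint
and nonadjacent. -/
theorem stmt3 {V : Type*} (G : SimpleGraph V) (hG : IsChordal G)
    (x : V) (Y : Set V) (hB : IsInducedStar G x Y)
    (yi yj : V) (hyi : yi ∈ Y) (hyj : yj ∈ Y) (hne : yi ≠ yj) :
    Disjoint (M1y G x yi) (M1y G x yj) ∧
      ∀ a ∈ M1y G x yi, ∀ b ∈ M1y G x yj, ¬ G.Adj a b :=
  stmt3_general G (hG.not_cycleGraph_isIndContained le_rfl)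
    (hG.not_cycleGraph_isIndContained (Nat.le_succ 4)) x Y hB yi yj hyi hyj hne
end

section
/- Let G be a finite simple chordal graph and let B be an induced complete bipartite subgraph of G with parts B_X = {x} and B_Y = {y_1,...,y_k}. Then for every vertex w ∈ M_2(B), the set f(w) = N_1(w) ∩ M_1(B) induces a clique in G. -/
open SimpleGraph

/-- `M₁(B_X) = N₁(B_X) ∩ N₂(B_Y)` where `B_X = {x}` and `B_Y = Y`. -/
def M1X {V : Type*} (G : SimpleGraph V) (x : V) (Y : Set V) : Set V :=
  nOne G {x} ∩ nTwo G Y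

/-- `M₁(B_Y) = N₁(B_Y) ∩ N₂(B_X)`. -/
def M1Y {V : Type*} (G : SimpleGraph V) (x : V) (Y : Set V) : Set V :=
  nOne G Y ∩ nTwo G {x}

/-- `M₂(B_X) = N₁(M₁(B_X)) ∩ N₂(B_X)`. -/
def M2X {V : Type*} (G : SimpleGraph V) (x : V) (Y : Set V) : Set V :=
  nOne G (M1X G x Y) ∩ nTwo G {x}

/-- `M₂(B_Y) = N₁(M₁(B_Y)) ∩ N₂(B_Y)`. -/
def M2Y {V : Type*} (G : SimpleGraph V) (x : V) (Y : Set V) : Set V :=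
  nOne G (M1Y G x Y) ∩ nTwo G Y

/-- `M₁(B) = M₁(B_X) ∪ M₁(B_Y)`. -/
def M1B {V : Type*} (G : SimpleGraph V) (x : V) (Y : Set V) : Set V :=
  M1X G x Y ∪ M1Y G x Y

/-- `M₂(B) = M₂(B_X) ∪ M₂(B_Y)`. -/
def M2B {V : Type*} (G : SimpleGraph V) (x : V) (Y : Set V) : Set V :=
  M2X G x Y ∪ M2Y G x Y

/-- `f(S) = N₁(S) ∩ M₁(B)`. -/
def fSet {V : Type*} (G : SimpleGraph V) (x : V) (Y : Set V) (S : Set V) : Set V :=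
  nOne G S ∩ M1B G x Y

/-!
In a chordal graph, if a vertex `w` lies outside a connected set `S` and has no neighbour in it,
then the neighbours of `w` that have a neighbour in `S` form a clique: a shortest path between two
nonadjacent ones with all interior vertices in `S` would close up through `w` to an induced cycle
of length at least 4. With `S` a single vertex, this shows that a vertex of `M₂(B)` neither belongs
to `B` nor has a neighbour in `B`. As `B` is connected, the case `S = B` then yields the theorem.
-/

section

variable {V : Type*} {G : SimpleGraph V}

theorem adj_getVert_iff_of_length_eq_dist {u v : V} {p : G.Walk u v} (hp : p.length = G.dist u v)
    {i j : ℕ} (hi : i ≤ p.length) (hj : j ≤ p.length) :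
    G.Adj (p.getVert i) (p.getVert j) ↔ i + 1 = j ∨ j + 1 = i := by
  have le_succ_of_adj {k l : ℕ} (hk : k ≤ p.length) (hl : l ≤ p.length)
      (h : G.Adj (p.getVert k) (p.getVert l)) : l ≤ k + 1 := by
    have shortcut := dist_le <| (p.take k).append <| .cons h (p.drop l)
    rw [Walk.length_append, Walk.length_cons, Walk.take_length, Walk.drop_length] at shortcut
    lia
  constructor
  · intro h
    have hij : i ≠ j := by rintro rfl; exact h.ne rfl
    have := le_succ_of_adj hi hj h
    have := le_succ_of_adj hj hi h.symm
    lia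
  · rintro (rfl | rfl)
    · exact p.adj_getVert_succ hj
    · exact (p.adj_getVert_succ hi).symm

theorem exists_pathGraph_embedding_of_reachable {u v : V} (h : G.Reachable u v) :
    ∃ φ : pathGraph (G.dist u v + 1) ↪g G, φ 0 = u ∧ φ (Fin.last _) = v := by
  obtain ⟨p, hpath, hp⟩ := h.exists_path_of_dist
  have le_length (i : Fin (G.dist u v + 1)) : (i : ℕ) ≤ p.length := by lia
  let φ : pathGraph (G.dist u v + 1) ↪g G :=
    { toFun i := p.getVert i
      inj' i j hij := Fin.ext (hpath.getVert_injOn (le_length i) (le_length j) hij)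
      map_rel_iff' {i j} := by
        rw [pathGraph_adj]
        exact adj_getVert_iff_of_length_eq_dist hp (le_length i) (le_length j) }
  exact ⟨φ, p.getVert_zero, p.getVert_of_length_le hp.le⟩

theorem exists_pathGraph_embedding_of_preconnected_induce {T : Set V}
    (hT : (G.induce T).Preconnected) {a b : V} (ha : a ∈ T) (hb : b ∈ T) :
    ∃ (n : ℕ) (φ : pathGraph (n + 1) ↪g G), φ 0 = a ∧ φ (Fin.last n) = b ∧ ∀ i, φ i ∈ T := by
  obtain ⟨φ, hφa, hφb⟩ := exists_pathGraph_embedding_of_reachable (hT ⟨a, ha⟩ ⟨b, hb⟩)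
  exact ⟨_, (Embedding.induce T).comp φ, congrArg Subtype.val hφa, congrArg Subtype.val hφb,
    fun i => (φ i).2⟩

theorem cycleGraph_adj_iff_of_lt {n : ℕ} {i j : Fin n} (hij : i < j) :
    (cycleGraph n).Adj i j ↔ (i : ℕ) + 1 = j ∨ (i : ℕ) = 0 ∧ (j : ℕ) + 1 = n := by
  rw [cycleGraph_adj', Fin.coe_sub_iff_lt.mpr hij, Fin.coe_sub_iff_le.mpr hij.le]
  lia

theorem cycleGraph_adj_castSucc_castSucc {n : ℕ} {i j : Fin (n + 1)} :
    (cycleGraph (n + 2)).Adj i.castSucc j.castSucc ↔ (pathGraph (n + 1)).Adj i j := by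
  wlog! hij : i < j generalizing i j
  · rcases hij.eq_or_lt with rfl | hji
    · simp only [SimpleGraph.irrefl]
    · rw [adj_comm, this hji, adj_comm]
  rw [cycleGraph_adj_iff_of_lt (Fin.castSucc_lt_castSucc_iff.mpr hij), pathGraph_adj,
    Fin.val_castSucc, Fin.val_castSucc]
  lia

theorem cycleGraph_adj_castSucc_last {n : ℕ} {i : Fin (n + 1)} :
    (cycleGraph (n + 2)).Adj i.castSucc (Fin.last (n + 1)) ↔ i = 0 ∨ i = Fin.last n := by
  rw [cycleGraph_adj_iff_of_lt i.castSucc_lt_last, Fin.ext_iff, Fin.ext_iff, Fin.val_castSucc,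
    Fin.val_last, Fin.val_last, Fin.val_zero]
  lia

theorem cycleGraph_isIndContained_of_pathGraph_embedding {n : ℕ} (φ : pathGraph (n + 1) ↪g G)
    {w : V} (hw : w ∉ Set.range φ) (hadj : ∀ i, G.Adj w (φ i) ↔ i = 0 ∨ i = Fin.last n) :
    cycleGraph (n + 2) ⊴ G := by
  refine ⟨⟨⟨Fin.snoc φ w, Fin.snoc_injective_iff.mpr ⟨φ.injective, hw⟩⟩, ?_⟩⟩
  intro i j
  induction i using Fin.lastCases <;> induction j using Fin.lastCases <;>
    simp [cycleGraph_adj_castSucc_castSucc, cycleGraph_adj_castSucc_last, hadj,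
      G.adj_comm _ w, (cycleGraph _).adj_comm (Fin.last _)]

theorem connected_induce_insert_of_preconnected {S : Set V} (hS : (G.induce S).Preconnected)
    {a s : V} (hs : s ∈ S) (h : G.Adj a s) : (G.induce (insert a S)).Connected :=
  connected_induce_union (s := {a}) Preconnected.of_subsingleton hS rfl hs h

theorem connected_induce_insert_of_forall_adj {x : V} {Y : Set V} (h : ∀ y ∈ Y, G.Adj x y) :
    (G.induce (insert x Y)).Connected := by
  refine connected_iff_exists_forall_reachable _ |>.mpr ⟨⟨x, Set.mem_insert x Y⟩, ?_⟩
  rintro ⟨y, rfl | hy⟩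
  · rfl
  · exact Adj.reachable (h y hy)

theorem mem_nOne_singleton {s v : V} : v ∈ nOne G {s} ↔ G.Adj v s := by
  simpa [nOne] using Adj.ne

theorem M1B_subset_nOne_insert {x : V} {Y : Set V} : M1B G x Y ⊆ nOne G (insert x Y) := by
  rintro v (⟨⟨hvx, s, hs, hvs⟩, hvY, -⟩ | ⟨⟨hvY, s, hs, hvs⟩, hvx, -⟩)
  · exact ⟨not_or.mpr ⟨hvx, hvY⟩, s, Set.mem_insert_iff.mpr (.inl hs), hvs⟩
  · exact ⟨not_or.mpr ⟨hvx, hvY⟩, s, Set.mem_insert_of_mem x hs, hvs⟩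

namespace IsChordal

theorem not_cycleGraph_isIndContained_s5 (hG : IsChordal G) {n : ℕ} (hn : 4 ≤ n) :
    ¬ cycleGraph n ⊴ G := by
  rintro ⟨φ⟩
  exact (hG n hn _).false φ.isoInduceRange.symm

theorem isClique_nOne_inter_nOne (hG : IsChordal G) {S : Set V} (hS : (G.induce S).Preconnected)
    {w : V} (hw : w ∉ S) (hwS : w ∉ nOne G S) : G.IsClique (nOne G {w} ∩ nOne G S) := by
  rintro a ⟨haw, -, s, hs, has⟩ b ⟨hbw, -, t, ht, hbt⟩ hab
  rw [mem_nOne_singleton] at haw hbw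
  by_contra hnadj
  have hT : (G.induce (insert a (insert b S))).Connected :=
    connected_induce_insert_of_preconnected
      (connected_induce_insert_of_preconnected hS ht hbt).preconnected
      (Set.mem_insert_of_mem b hs) has
  obtain ⟨n, φ, rfl, rfl, hφ⟩ := exists_pathGraph_embedding_of_preconnected_induce hT.preconnected
    (Set.mem_insert a _) (Set.mem_insert_of_mem a (Set.mem_insert b S))
  have ends_of_adj (i : Fin (n + 1)) (hi : G.Adj w (φ i)) : i = 0 ∨ i = Fin.last n := by
    rcases hφ i with h | h | h
    · exact .inl (φ.injective h)
    · exact .inr (φ.injective h)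
    · exact (hwS ⟨hw, _, h, hi⟩).elim
  have w_notMem_range : w ∉ Set.range φ := by
    rintro ⟨i, rfl⟩
    rcases hφ i with h | h | h
    · exact haw.ne h.symm
    · exact hbw.ne h.symm
    · exact hw h
  have two_le : 2 ≤ n := by
    match n with
    | 0 => exact (hab rfl).elim
    | 1 => exact (hnadj (φ.map_adj_iff.mpr (pathGraph_adj.mpr (.inl rfl)))).elim
    | n + 2 => lia
  refine hG.not_cycleGraph_isIndContained_s5 (Nat.add_le_add_right two_le 2)
    (cycleGraph_isIndContained_of_pathGraph_embedding φ w_notMem_range fun i =>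
      ⟨ends_of_adj i, ?_⟩)
  rintro (rfl | rfl)
  exacts [haw.symm, hbw.symm]

theorem isClique_commonNeighbors (hG : IsChordal G) {u v : V} (hne : u ≠ v)
    (hnadj : ¬ G.Adj u v) : G.IsClique (G.commonNeighbors u v) := by
  have hclique := hG.isClique_nOne_inter_nOne (S := {v}) Preconnected.of_subsingleton hne
    (mt mem_nOne_singleton.mp hnadj)
  refine hclique.subset ?_
  rintro a ⟨hua, hva⟩
  exact ⟨mem_nOne_singleton.mpr hua.symm, mem_nOne_singleton.mpr hva.symm⟩

theorem not_adj_of_mem_M2X (hG : IsChordal G) {x y w : V} {Y : Set V} (hw : w ∈ M2X G x Y)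
    (hy : y ∈ Y) (hxy : G.Adj x y) : ¬ G.Adj w y := by
  obtain ⟨⟨-, a, ⟨hax, haY, hnaY, -⟩, hwa⟩, hwx, hnwx, -⟩ := hw
  rw [mem_nOne_singleton] at hax
  rw [Set.notMem_singleton_iff] at hwx
  intro hwy
  exact hnaY y hy <| hG.isClique_commonNeighbors hwx (hnwx x rfl) ⟨hwa, hax.symm⟩ ⟨hwy, hxy⟩
    (ne_of_mem_of_not_mem hy haY).symm

theorem not_adj_of_mem_M2Y (hG : IsChordal G) {x w : V} {Y : Set V} (hxY : ∀ y ∈ Y, G.Adj x y)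
    (hw : w ∈ M2Y G x Y) : ¬ G.Adj w x := by
  obtain ⟨⟨-, b, ⟨⟨-, y, hy, hby⟩, hbx, hnbx, -⟩, hwb⟩, hwY, hnwY, -⟩ := hw
  intro hwx
  exact hnbx x rfl <| hG.isClique_commonNeighbors (ne_of_mem_of_not_mem hy hwY).symm (hnwY y hy)
    ⟨hwb, hby.symm⟩ ⟨hwx, (hxY y hy).symm⟩ hbx

theorem notMem_insert_and_notMem_nOne_of_mem_M2B (hG : IsChordal G) {x w : V} {Y : Set V}
    (hxY : ∀ y ∈ Y, G.Adj x y) (hw : w ∈ M2B G x Y) :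
    w ∉ insert x Y ∧ w ∉ nOne G (insert x Y) := by
  rcases hw with hwX | hwY
  · have hnwx : ¬ G.Adj w x := hwX.2.2.1 x rfl
    refine ⟨not_or.mpr ⟨hwX.2.1, fun h => hnwx (hxY w h).symm⟩, ?_⟩
    rintro ⟨-, s, rfl | hs, hws⟩
    · exact hnwx hws
    · exact hG.not_adj_of_mem_M2X hwX hs (hxY s hs) hws
  · obtain ⟨hw_notMem, hnwY, -, -, y, hy, -⟩ := hwY.2
    refine ⟨not_or.mpr ⟨fun h => hnwY y hy (h ▸ hxY y hy), hw_notMem⟩, ?_⟩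
    rintro ⟨-, s, rfl | hs, hws⟩
    · exact hG.not_adj_of_mem_M2Y hxY hwY hws
    · exact hnwY s hs hws

end IsChordal

end

theorem stmt5_general {V : Type*} (G : SimpleGraph V) (hG : IsChordal G)
    (x : V) (Y : Set V) (hxY : ∀ y ∈ Y, G.Adj x y) (w : V) (hw : w ∈ M2B G x Y) :
    G.IsClique (fSet G x Y {w}) := by
  obtain ⟨w_notMem, w_notMem_nOne⟩ := hG.notMem_insert_and_notMem_nOne_of_mem_M2B hxY hw
  have hB : (G.induce (insert x Y)).Connected := connected_induce_insert_of_forall_adj hxY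
  exact (hG.isClique_nOne_inter_nOne hB.preconnected w_notMem w_notMem_nOne).subset <|
    Set.inter_subset_inter_right _ M1B_subset_nOne_insert

/-- For every `w ∈ M₂(B)`, the set `f(w) = N₁(w) ∩ M₁(B)` is a clique of `G`. -/
theorem stmt5 {V : Type*} (G : SimpleGraph V) (hG : IsChordal G)
    (x : V) (Y : Set V) (hB : IsInducedStar G x Y)
    (w : V) (hw : w ∈ M2B G x Y) :
    G.IsClique (fSet G x Y {w}) :=
  stmt5_general G hG x Y hB.2.2.1 w hw
end
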